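/- If Y is a uniformly convex Banach space, then the pair (c0(⊕_{n=1}^∞ ℓ2^n), Y) has the Bishop-Phelps-Bollobás property for operators. -/

import Mathlib

open Filter Topology

noncomputable section

/-- The Euclidean space `ℓ₂ⁿ⁺¹` forming the `n`-th block (so blocks have dimensions 1, 2, 3, …),
i.e. the block `I(n+1)` of the paper. -/
abbrev E2 (n : ℕ) : Type := EuclideanSpace ℝ (Fin (n + 1))

/-- `c₀(⊕ₙ ℓ₂ⁿ)`: the subspace of the `ℓ∞`-sum of the spaces `ℓ₂ⁿ` consisting of those
elements whose block norms tend to `0`; it carries the norm `‖x‖ = sup_n ‖x n‖`. -/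
def c0E2 : Submodule ℝ (lp E2 ⊤) where
  carrier := {x | Tendsto (fun n => ‖x n‖) atTop (𝓝 0)}
  add_mem' := by
    intro x y hx hy
    refine squeeze_zero (fun n => norm_nonneg _) (fun n => ?_) (by simpa using hx.add hy)
    rw [lp.coeFn_add]
    exact norm_add_le _ _
  zero_mem' := by
    simp only [Set.mem_setOf_eq, lp.coeFn_zero, Pi.zero_apply, norm_zero]
    exact tendsto_const_nhds
  smul_mem' := by
    intro c x hx
    have h : ∀ n, ‖(c • x : lp E2 ⊤) n‖ = ‖c‖ * ‖x n‖ := by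
      intro n; rw [lp.coeFn_smul]; simp [norm_smul]
    have := hx.const_mul ‖c‖
    simp only [mul_zero] at this
    exact Tendsto.congr (fun n => (h n).symm) this

/-- The standard unit basis vector of `c₀(⊕ₙ ℓ₂ⁿ)` sitting in block `j` at coordinate `i`. -/
def stdBasis (j : ℕ) (i : Fin (j + 1)) : c0E2 :=
  ⟨lp.single ⊤ j (EuclideanSpace.single i 1), by
    refine Tendsto.congr' ?_ (tendsto_const_nhds : Tendsto (fun _ : ℕ => (0:ℝ)) atTop (𝓝 0))
    filter_upwards [eventually_gt_atTop j] with n hn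
    rw [lp.single_apply_ne ⊤ j _ (by omega : n ≠ j), norm_zero]⟩

/-- A pair `(X, Y)` of normed spaces has the **Bishop–Phelps–Bollobás property for operators**:
for every `ε > 0` there is `η > 0` such that whenever a norm-one operator `T : X → Y` and a
norm-one vector `x₀` satisfy `‖T x₀‖ > 1 - η`, there are a norm-one vector `u₀` and a norm-one
operator `S` with `‖S u₀‖ = 1`, `‖u₀ - x₀‖ < ε` and `‖S - T‖ < ε`. -/
def HasBPBp (X Y : Type*) [NormedAddCommGroup X] [NormedSpace ℝ X]
    [NormedAddCommGroup Y] [NormedSpace ℝ Y] : Prop :=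
  ∀ ε : ℝ, 0 < ε → ∃ η : ℝ, 0 < η ∧
    ∀ (T : X →L[ℝ] Y) (x₀ : X), ‖T‖ = 1 → ‖x₀‖ = 1 → 1 - η < ‖T x₀‖ →
      ∃ (u₀ : X) (S : X →L[ℝ] Y),
        ‖u₀‖ = 1 ∧ ‖S‖ = 1 ∧ ‖S u₀‖ = 1 ∧ ‖u₀ - x₀‖ < ε ∧ ‖S - T‖ < ε

/-! A uniformly convex range turns almost attainment into smallness: if `‖T x‖` is close to `1`,
then `T` is small on every `y` with `‖x ± y‖ ≤ 1`, in particular on vectors supported where the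
blocks of `x` stay away from norm `1`. With `x = x₀` this says that `T` nearly depends only on
the finitely many blocks in which `x₀` is almost normalized, so we may assume that it depends
only on these. A rank-one correction of `T` then attains its norm at some `z` with
`‖T (x₀ + z)‖` close to `2`. Let `C` be the set of blocks in which the midpoint of `x₀` and `z`
is short. Off `C`, uniform convexity of the blocks makes `z` close to `x₀`. On `C`, the operator
is small because it almost attains its norm at the midpoint, so it may be precomposed there with
rank-one contractions sending the normalized blocks of `x₀` to those of `z`; this moves the
norm-attaining vector close to `x₀`. -/

section NormedSpace

variable {X Y : Type*} [NormedAddCommGroup X] [NormedSpace ℝ X] [NormedAddCommGroup Y]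
  [NormedSpace ℝ Y]

theorem exists_norm_sub_le_two_mul_of_norm_apply_eq {T S : X →L[ℝ] Y} {v : X} (hT : ‖T‖ = 1)
    (hv : ‖v‖ ≤ 1) (hSv : ‖S v‖ = ‖S‖) (hST : ‖S - T‖ < 1) :
    ‖v‖ = 1 ∧ ∃ S' : X →L[ℝ] Y, ‖S'‖ = 1 ∧ ‖S' v‖ = 1 ∧ ‖S' - T‖ ≤ 2 * ‖S - T‖ := by
  have hS : 0 < ‖S‖ := by
    have := norm_sub_norm_le T S
    rw [norm_sub_rev] at this
    linarith
  have hS' : ‖‖S‖⁻¹ • S‖ = 1 := by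
    rw [norm_smul, norm_inv, norm_norm, inv_mul_cancel₀ hS.ne']
  have hS'v : ‖(‖S‖⁻¹ • S) v‖ = 1 := by
    rw [smul_apply, norm_smul, norm_inv, norm_norm, hSv, inv_mul_cancel₀ hS.ne']
  refine ⟨le_antisymm hv ?_, ‖S‖⁻¹ • S, hS', hS'v, ?_⟩
  · simpa only [hS', hS'v, one_mul] using (‖S‖⁻¹ • S).le_opNorm v
  · have hdist : ‖‖S‖⁻¹ • S - S‖ ≤ ‖S - T‖ := calc
      ‖‖S‖⁻¹ • S - S‖ = ‖((1 - ‖S‖) * ‖S‖⁻¹) • S‖ := by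
        rw [sub_mul, one_mul, mul_inv_cancel₀ hS.ne', sub_smul, one_smul]
      _ = |‖S‖ - ‖T‖| := by
        rw [norm_smul, norm_mul, norm_inv, norm_norm, inv_mul_cancel_right₀ hS.ne', hT,
          Real.norm_eq_abs, abs_sub_comm]
      _ ≤ ‖S - T‖ := abs_norm_sub_norm_le S T
    linarith [norm_sub_le_norm_sub_add_norm_sub (‖S‖⁻¹ • S) S T]

theorem hasBPBp_of_exists_norm_apply_eq
    (h : ∀ ε : ℝ, 0 < ε → ∃ η : ℝ, 0 < η ∧ ∀ (T : X →L[ℝ] Y) (x₀ : X), ‖T‖ = 1 → ‖x₀‖ = 1 →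
      1 - η < ‖T x₀‖ → ∃ (v : X) (S : X →L[ℝ] Y),
        ‖v‖ ≤ 1 ∧ ‖S v‖ = ‖S‖ ∧ ‖v - x₀‖ < ε ∧ ‖S - T‖ < ε) :
    HasBPBp X Y := by
  intro ε hε
  obtain ⟨η, hη, H⟩ := h (min (ε / 2) 1) (by positivity)
  refine ⟨η, hη, fun T x₀ hT hx₀ hTx₀ ↦ ?_⟩
  obtain ⟨v, S, hv, hSv, hvx₀, hST⟩ := H T x₀ hT hx₀ hTx₀
  rw [lt_min_iff] at hvx₀ hST
  obtain ⟨hv1, S', hS', hS'v, hS'T⟩ :=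
    exists_norm_sub_le_two_mul_of_norm_apply_eq hT hv hSv hST.2
  exact ⟨v, S', hv1, hS', hS'v, by linarith, by linarith⟩

theorem exists_norm_apply_eq_opNorm_of_finiteDimensional [FiniteDimensional ℝ X]
    (T : X →L[ℝ] Y) : ∃ z : X, ‖z‖ ≤ 1 ∧ ‖T z‖ = ‖T‖ := by
  have := FiniteDimensional.proper_real X
  obtain ⟨z, hz, hmax⟩ := (isCompact_closedBall (0 : X) 1).exists_sSup_image_eq
    (Metric.nonempty_closedBall.2 zero_le_one) T.continuous.norm.continuousOn
  exact ⟨z, mem_closedBall_zero_iff.1 hz, by rw [← hmax, T.sSup_unitClosedBall_eq_norm]⟩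

theorem exists_norm_apply_eq_opNorm_of_comp_eq (T : X →L[ℝ] Y) (P : X →L[ℝ] X)
    [FiniteDimensional ℝ P.range] (hP : ‖P‖ ≤ 1) (hTP : T.comp P = T) :
    ∃ z : X, ‖z‖ ≤ 1 ∧ ‖T z‖ = ‖T‖ := by
  let T' : P.range →L[ℝ] Y := T.comp P.range.subtypeL
  obtain ⟨z, hz, hTz⟩ := exists_norm_apply_eq_opNorm_of_finiteDimensional T'
  refine ⟨z, hz, le_antisymm (T.unit_le_opNorm z hz) ?_⟩
  refine T.opNorm_le_bound (norm_nonneg _) fun x ↦ ?_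
  calc
    ‖T x‖ = ‖T' ⟨P x, x, rfl⟩‖ := congr_arg norm (DFunLike.congr_fun hTP.symm x)
    _ ≤ ‖T'‖ * ‖P x‖ := T'.le_opNorm _
    _ ≤ ‖T z‖ * ‖x‖ := by
      rw [← hTz]
      gcongr
      · rfl
      · exact (P.le_of_opNorm_le hP x).trans_eq (one_mul _)

theorem abs_apply_add_abs_apply_le_max {g : StrongDual ℝ Y} (hg : ‖g‖ ≤ 1) (w t : Y) :
    |g w| + |g t| ≤ max ‖w + t‖ ‖w - t‖ := by
  have abs_g_le (y : Y) : |g y| ≤ ‖y‖ := by simpa using g.le_of_opNorm_le hg y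
  have hadd := abs_le.1 (abs_g_le (w + t))
  have hsub := abs_le.1 (abs_g_le (w - t))
  rw [map_add] at hadd
  rw [map_sub] at hsub
  rw [le_max_iff]
  rcases abs_cases (g w) with hw | hw <;> rcases abs_cases (g t) with ht | ht
  · left; linarith
  · right; linarith
  · right; linarith
  · left; linarith

theorem exists_norm_sub_id_le_forall_le_max (t : Y) (ht : ‖t‖ ≤ 1) {γ : ℝ} (hγ : 0 < γ) :
    ∃ U : Y →L[ℝ] Y, ‖U - .id ℝ Y‖ ≤ γ ∧ ∀ w : Y, ‖w‖ ≤ 1 → ‖U t‖ ≤ ‖U w‖ →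
      2 - (3 + γ⁻¹) * (1 - ‖t‖) ≤ max ‖w + t‖ ‖w - t‖ := by
  obtain ⟨g, hg, hgt⟩ := exists_dual_vector'' ℝ t
  simp only [RCLike.ofReal_real_eq_id, id_eq] at hgt
  have abs_g_le (y : Y) : |g y| ≤ ‖y‖ := by simpa using g.le_of_opNorm_le hg y
  refine ⟨.id ℝ Y + γ • g.smulRight t, ?_, fun w hw hUw ↦ ?_⟩
  · rw [add_sub_cancel_left, norm_smul, g.norm_smulRight_apply, Real.norm_of_nonneg hγ.le]
    exact mul_le_of_le_one_right hγ.le (mul_le_one₀ hg (norm_nonneg t) ht)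
  simp only [add_apply, ContinuousLinearMap.id_apply, smul_apply,
    ContinuousLinearMap.smulRight_apply] at hUw
  have hlow : ‖t‖ + γ * ‖t‖ ^ 2 ≤ ‖t + γ • g t • t‖ := by
    have := (le_abs_self _).trans (abs_g_le (t + γ • g t • t))
    simpa only [map_add, map_smul, smul_eq_mul, hgt, ← sq] using this
  have hup : ‖w + γ • g w • t‖ ≤ 1 + γ * |g w| := calc
    ‖w + γ • g w • t‖ ≤ ‖w‖ + γ * (|g w| * ‖t‖) := by
      simpa only [norm_smul, Real.norm_eq_abs, abs_of_pos hγ] using norm_add_le w (γ • g w • t)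
    _ ≤ 1 + γ * |g w| := by
      gcongr
      exact mul_le_of_le_one_right (abs_nonneg _) ht
  have hgw : ‖t‖ ^ 2 - γ⁻¹ * (1 - ‖t‖) ≤ |g w| := by
    have : γ * (‖t‖ ^ 2 - γ⁻¹ * (1 - ‖t‖)) ≤ γ * |g w| := by
      rw [mul_sub, mul_inv_cancel_left₀ hγ.ne']
      linarith
    exact le_of_mul_le_mul_left this hγ
  have hmax : |g w| + ‖t‖ ≤ max ‖w + t‖ ‖w - t‖ := by
    simpa only [hgt, abs_norm] using abs_apply_add_abs_apply_le_max hg w t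
  have hsq : 2 * ‖t‖ - 1 ≤ ‖t‖ ^ 2 := by linarith [sq_nonneg (‖t‖ - 1)]
  linarith

theorem exists_norm_comp_apply_eq_opNorm_comp {T : X →L[ℝ] Y} {P : X →L[ℝ] X}
    [FiniteDimensional ℝ P.range] (hT : ‖T‖ ≤ 1) (hP : ‖P‖ ≤ 1) (hTP : T.comp P = T) {x : X}
    (hx : ‖x‖ ≤ 1) {γ : ℝ} (hγ : 0 < γ) :
    ∃ (U : Y →L[ℝ] Y) (z : X), ‖U - .id ℝ Y‖ ≤ γ ∧ ‖z‖ ≤ 1 ∧ ‖U (T z)‖ = ‖U.comp T‖ ∧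
      2 - (3 + γ⁻¹) * (1 - ‖T x‖) ≤ ‖T (z + x)‖ := by
  have norm_T_le {y : X} (hy : ‖y‖ ≤ 1) : ‖T y‖ ≤ 1 := (T.unit_le_opNorm y hy).trans hT
  obtain ⟨U, hU, H⟩ := exists_norm_sub_id_le_forall_le_max (T x) (norm_T_le hx) hγ
  obtain ⟨z, hz, hUz⟩ := exists_norm_apply_eq_opNorm_of_comp_eq (U.comp T) P hP (by
    rw [ContinuousLinearMap.comp_assoc, hTP])
  have hUx : ‖U (T x)‖ ≤ ‖U (T z)‖ :=
    ((U.comp T).unit_le_opNorm x hx).trans_eq hUz.symm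
  rcases le_max_iff.1 (H (T z) (norm_T_le hz) hUx) with h | h
  · exact ⟨U, z, hU, hz, hUz, by rwa [map_add]⟩
  · refine ⟨U, -z, hU, by rwa [norm_neg], by rwa [map_neg, map_neg, norm_neg], ?_⟩
    rwa [map_add, map_neg, neg_add_eq_sub, norm_sub_rev]

theorem exists_norm_le_one_apply_eq {u : X} {w : Y} (h : ‖w‖ ≤ ‖u‖) :
    ∃ L : X →L[ℝ] Y, ‖L‖ ≤ 1 ∧ L u = w := by
  obtain ⟨g, hg, hgu⟩ := exists_dual_vector'' ℝ u
  simp only [RCLike.ofReal_real_eq_id, id_eq] at hgu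
  refine ⟨‖u‖⁻¹ • g.smulRight w, ?_, ?_⟩
  · rw [norm_smul, norm_inv, norm_norm, g.norm_smulRight_apply]
    exact inv_mul_le_one_of_le₀ ((mul_le_of_le_one_left (norm_nonneg w) hg).trans h) (norm_nonneg u)
  · rcases eq_or_ne u 0 with rfl | hu
    · simpa [eq_comm] using h
    · simp only [smul_apply, ContinuousLinearMap.smulRight_apply, hgu,
        inv_smul_smul₀ (norm_ne_zero_iff.2 hu)]

theorem norm_comp_apply_eq_opNorm_comp {Z : Type*} [NormedAddCommGroup Z] [NormedSpace ℝ Z]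
    {S : X →L[ℝ] Y} {R : Z →L[ℝ] X} {v : Z} (hR : ‖R‖ ≤ 1) (hv : ‖v‖ ≤ 1)
    (h : ‖S (R v)‖ = ‖S‖) : ‖S.comp R v‖ = ‖S.comp R‖ := by
  refine le_antisymm ((S.comp R).unit_le_opNorm v hv) ?_
  calc
    ‖S.comp R‖ ≤ ‖S‖ * ‖R‖ := S.opNorm_comp_le R
    _ ≤ ‖S‖ := mul_le_of_le_one_right (norm_nonneg S) hR
    _ = ‖S.comp R v‖ := h.symm

theorem opNorm_comp_comp_sub_le {T : X →L[ℝ] Y} {U : Y →L[ℝ] Y} {R : X →L[ℝ] X} {γ c : ℝ}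
    (hT : ‖T‖ ≤ 1) (hU : ‖U - .id ℝ Y‖ ≤ γ) (hR : ‖R‖ ≤ 1) (hc : 0 ≤ c)
    (hTR : ∀ y, ‖T (R y - y)‖ ≤ c * ‖y‖) : ‖(U.comp T).comp R - T‖ ≤ γ + c := by
  have hγ : 0 ≤ γ := (norm_nonneg _).trans hU
  refine ContinuousLinearMap.opNorm_le_bound _ (add_nonneg hγ hc) fun y ↦ ?_
  have hTRy : ‖T (R y)‖ ≤ ‖y‖ := by
    simpa only [one_mul] using T.le_of_opNorm_le_of_le hT (R.le_of_opNorm_le hR y)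
  have hUTR : ‖U (T (R y)) - T (R y)‖ ≤ γ * ‖y‖ :=
    ContinuousLinearMap.le_of_opNorm_le_of_le _ hU hTRy
  calc
    ‖((U.comp T).comp R - T) y‖ = ‖(U (T (R y)) - T (R y)) + T (R y - y)‖ := by
      rw [map_sub, sub_add_sub_cancel]
      rfl
    _ ≤ γ * ‖y‖ + c * ‖y‖ := norm_add_le_of_le hUTR (hTR y)
    _ = (γ + c) * ‖y‖ := (add_mul γ c ‖y‖).symm

theorem norm_inv_norm_smul_self_sub_le {x : X} (hx : ‖x‖ ≤ 1) :
    ‖‖x‖⁻¹ • x - x‖ ≤ 1 - ‖x‖ := by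
  rcases eq_or_ne x 0 with rfl | h
  · simp
  have hx0 : ‖x‖ ≠ 0 := norm_ne_zero_iff.2 h
  have : ‖x‖⁻¹ • x - x = (1 - ‖x‖) • ‖x‖⁻¹ • x := by
    rw [sub_smul, one_smul, smul_inv_smul₀ hx0]
  rw [this, norm_smul, norm_smul, norm_inv, norm_norm, inv_mul_cancel₀ hx0, mul_one,
    Real.norm_of_nonneg (sub_nonneg.2 hx)]

theorem exists_forall_norm_lt_of_norm_add_le_of_norm_sub_le [UniformConvexSpace Y] {ε : ℝ}
    (hε : 0 < ε) :
    ∃ δ : ℝ, 0 < δ ∧ ∀ a b : Y, ‖a + b‖ ≤ 1 → ‖a - b‖ ≤ 1 → 1 - δ < ‖a‖ → ‖b‖ < ε := by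
  obtain ⟨δ, hδ, H⟩ := exists_forall_closed_ball_dist_add_le_two_sub Y (mul_pos two_pos hε)
  refine ⟨δ / 2, half_pos hδ, fun a b hadd hsub ha ↦ ?_⟩
  by_contra! hb
  have hdiff : ‖(a + b) - (a - b)‖ = 2 * ‖b‖ := by
    rw [add_sub_sub_cancel, ← two_smul ℝ b, norm_smul, Real.norm_two]
  have hsum : ‖(a + b) + (a - b)‖ = 2 * ‖a‖ := by
    rw [add_add_sub_cancel, ← two_smul ℝ a, norm_smul, Real.norm_two]
  linarith [H hadd hsub (by linarith)]

end NormedSpace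

section UniformlyConvexFamily

variable {ι : Type*} (E : ι → Type*) [∀ i, NormedAddCommGroup (E i)]

/-- The spaces `E i` are uniformly convex with a common modulus of convexity. The modulus is
required on the closed unit balls rather than on the unit spheres. -/
def UniformlyConvexFamily : Prop :=
  ∀ ⦃ε : ℝ⦄, 0 < ε → ∃ δ : ℝ, 0 < δ ∧
    ∀ i (x y : E i), ‖x‖ ≤ 1 → ‖y‖ ≤ 1 → ε ≤ ‖x - y‖ → ‖x + y‖ ≤ 2 - δ

variable {E} in
theorem UniformlyConvexFamily.exists_forall_norm_sub_lt [∀ i, NormedSpace ℝ (E i)]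
    (hE : UniformlyConvexFamily E) {ε : ℝ} (hε : 0 < ε) :
    ∃ τ : ℝ, 0 < τ ∧ ∀ i (x y : E i), ‖x‖ ≤ 1 → ‖y‖ ≤ 1 →
      1 - τ ≤ ‖(2⁻¹ : ℝ) • (x + y)‖ → ‖x - y‖ < ε := by
  obtain ⟨δ, hδ, H⟩ := hE hε
  refine ⟨δ / 4, by positivity, fun i x y hx hy hxy ↦ ?_⟩
  by_contra! h
  rw [norm_smul, norm_inv, Real.norm_two] at hxy
  linarith [H i x y hx hy h]

theorem uniformlyConvexFamily_of_innerProductSpace [∀ i, InnerProductSpace ℝ (E i)] :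
    UniformlyConvexFamily E := by
  intro ε hε
  refine ⟨2 - √(4 - ε ^ 2), ?_, fun i x y hx hy hxy ↦ ?_⟩
  · rw [sub_pos, Real.sqrt_lt' two_pos]
    linarith [pow_pos hε 2]
  · rw [sub_sub_cancel]
    refine Real.le_sqrt_of_sq_le ?_
    have hx2 : ‖x‖ ^ 2 ≤ 1 := pow_le_one₀ (norm_nonneg x) hx
    have hy2 : ‖y‖ ^ 2 ≤ 1 := pow_le_one₀ (norm_nonneg y) hy
    have hxy2 : ε ^ 2 ≤ ‖x - y‖ ^ 2 := pow_le_pow_left₀ hε.le hxy 2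
    linarith [parallelogram_law_with_norm ℝ x y]

end UniformlyConvexFamily

section C0Sum

variable {ι : Type*} {E F : ι → Type*} [∀ i, NormedAddCommGroup (E i)] [∀ i, NormedSpace ℝ (E i)]
  [∀ i, NormedAddCommGroup (F i)] [∀ i, NormedSpace ℝ (F i)]

variable (E) in
/-- The `c₀`-sum of a family of normed spaces, as a subspace of the `ℓ∞`-sum. Since `ι` carries no
order, convergence to `0` is along the cofinite filter. -/
def c0Sum : Submodule ℝ (lp E ⊤) where
  carrier := {x | Tendsto (fun i ↦ ‖x i‖) cofinite (𝓝 0)}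
  zero_mem' := by simpa using tendsto_const_nhds
  add_mem' {x y} hx hy :=
    squeeze_zero (fun _ ↦ norm_nonneg _) (fun i ↦ norm_add_le (x i) (y i))
      (by simpa only [add_zero] using hx.add hy)
  smul_mem' c x hx := by
    simpa only [Set.mem_ofPred_eq, lp.coeFn_smul, Pi.smul_apply, norm_smul, mul_zero]
      using hx.const_mul ‖c‖

theorem c0Sum_E2 : c0Sum E2 = c0E2 := by
  ext x
  change Tendsto _ cofinite _ ↔ Tendsto _ atTop _
  rw [Nat.cofinite_eq_atTop]

namespace c0Sum

/-- The projection of the `c₀`-sum onto its `i`-th block. -/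
def eval (i : ι) : c0Sum E →L[ℝ] E i := (lp.evalCLM ℝ E ⊤ i).comp (c0Sum E).subtypeL

theorem norm_eval_le (x : c0Sum E) (i : ι) : ‖eval i x‖ ≤ ‖x‖ :=
  lp.norm_apply_le_norm ENNReal.top_ne_zero x.1 i

theorem norm_le_of_forall_le {x : c0Sum E} {C : ℝ} (hC : 0 ≤ C) (h : ∀ i, ‖eval i x‖ ≤ C) :
    ‖x‖ ≤ C :=
  lp.norm_le_of_forall_le hC h

theorem norm_add_le_one_of_eval_eq_zero {x w : c0Sum E} {τ : ℝ} (hx : ‖x‖ ≤ 1) (hw : ‖w‖ ≤ τ)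
    (h : ∀ i, 1 - τ ≤ ‖eval i x‖ → eval i w = 0) : ‖x + w‖ ≤ 1 := by
  refine norm_le_of_forall_le zero_le_one fun i ↦ ?_
  rw [map_add]
  rcases le_or_gt (1 - τ) ‖eval i x‖ with hi | hi
  · rw [h i hi, add_zero]
    exact (norm_eval_le x i).trans hx
  · linarith [norm_add_le (eval i x) (eval i w), norm_eval_le w i]

theorem tendsto_norm_eval (x : c0Sum E) : Tendsto (fun i ↦ ‖eval i x‖) cofinite (𝓝 0) := x.2

@[ext]
theorem ext {x y : c0Sum E} (h : ∀ i, eval i x = eval i y) : x = y :=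
  Subtype.ext (lp.ext (funext h))

/-- The element of the `c₀`-sum with prescribed blocks. -/
def mk (f : ∀ i, E i) (hf : Tendsto (fun i ↦ ‖f i‖) cofinite (𝓝 0)) : c0Sum E :=
  ⟨⟨f, memℓp_infty hf.bddAbove_range_of_cofinite⟩, hf⟩

@[simp]
theorem eval_mk (f : ∀ i, E i) (hf : Tendsto (fun i ↦ ‖f i‖) cofinite (𝓝 0)) (i : ι) :
    eval i (mk f hf) = f i := rfl

theorem finite_setOf_le_norm_eval (x : c0Sum E) {c : ℝ} (hc : 0 < c) :
    {i | c ≤ ‖eval i x‖}.Finite := by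
  have h := eventually_cofinite.1 ((tendsto_norm_eval x).eventually_lt_const hc)
  simpa only [not_lt] using h

/-- The block diagonal operator between `c₀`-sums given by a bounded family of operators. -/
def map (L : ∀ i, E i →L[ℝ] F i) {C : NNReal} (hL : ∀ i, ‖L i‖ ≤ C) :
    c0Sum E →L[ℝ] c0Sum F :=
  LinearMap.mkContinuous
    { toFun x := mk (fun i ↦ L i (eval i x))
        (squeeze_zero (fun _ ↦ norm_nonneg _) (fun i ↦ (L i).le_of_opNorm_le (hL i) _)
          (by simpa only [mul_zero] using (tendsto_norm_eval x).const_mul (C : ℝ)))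
      map_add' x y := by ext i; simp only [eval_mk, map_add]
      map_smul' c x := by ext i; simp only [eval_mk, map_smul, RingHom.id_apply] }
    C fun x ↦ norm_le_of_forall_le (by positivity) fun i ↦
      (L i).le_of_opNorm_le_of_le (hL i) (norm_eval_le x i)

@[simp]
theorem eval_map (L : ∀ i, E i →L[ℝ] F i) {C : NNReal} (hL : ∀ i, ‖L i‖ ≤ C) (x : c0Sum E)
    (i : ι) : eval i (map L hL x) = L i (eval i x) := rfl

theorem norm_map_le (L : ∀ i, E i →L[ℝ] F i) {C : NNReal} (hL : ∀ i, ‖L i‖ ≤ C) :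
    ‖map L hL‖ ≤ C :=
  LinearMap.mkContinuous_norm_le _ C.2 _

theorem exists_norm_le_one_apply_eq_eval_eq {v z : c0Sum E} {C : Set ι}
    (hC : ∀ i ∈ C, ‖eval i z‖ ≤ ‖eval i v‖) (hC' : ∀ i ∉ C, eval i v = eval i z) :
    ∃ R : c0Sum E →L[ℝ] c0Sum E, ‖R‖ ≤ 1 ∧ R v = z ∧ ∀ x, ∀ i ∉ C, eval i (R x) = eval i x := by
  have hblock (i : ι) : ∃ L : E i →L[ℝ] E i, ‖L‖ ≤ (1 : NNReal) ∧ L (eval i v) = eval i z ∧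
      (i ∉ C → L = .id ℝ (E i)) := by
    by_cases hi : i ∈ C
    · obtain ⟨L, hL, hLv⟩ := exists_norm_le_one_apply_eq (hC i hi)
      exact ⟨L, hL, hLv, fun h ↦ absurd hi h⟩
    · exact ⟨.id ℝ (E i), ContinuousLinearMap.norm_id_le, hC' i hi, fun _ ↦ rfl⟩
  choose L hL hLv hLid using hblock
  refine ⟨map L hL, norm_map_le L hL, ?_, fun x i hi ↦ ?_⟩
  · ext i
    rw [eval_map, hLv]
  · rw [eval_map, hLid i hi, ContinuousLinearMap.id_apply]

section Piecewise

variable [DecidableEq ι] (A : Finset ι)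

/-- The element whose blocks are those of `f` in `A` and those of `x` off `A`. -/
def piecewise (f : ∀ i, E i) (x : c0Sum E) : c0Sum E :=
  mk (A.piecewise f fun i ↦ eval i x) ((tendsto_norm_eval x).congr' (by
    filter_upwards [A.eventually_cofinite_notMem] with i hi
    rw [A.piecewise_eq_of_notMem _ _ hi]))

variable {A}

theorem eval_piecewise_of_mem (f : ∀ i, E i) (x : c0Sum E) {i : ι} (hi : i ∈ A) :
    eval i (piecewise A f x) = f i :=
  A.piecewise_eq_of_mem _ _ hi

theorem eval_piecewise_of_notMem (f : ∀ i, E i) (x : c0Sum E) {i : ι} (hi : i ∉ A) :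
    eval i (piecewise A f x) = eval i x :=
  A.piecewise_eq_of_notMem _ _ hi

theorem norm_piecewise_le {f : ∀ i, E i} {x : c0Sum E} {C : ℝ} (hf : ∀ i ∈ A, ‖f i‖ ≤ C)
    (hx : ‖x‖ ≤ C) : ‖piecewise A f x‖ ≤ C := by
  refine norm_le_of_forall_le ((norm_nonneg x).trans hx) fun i ↦ ?_
  by_cases hi : i ∈ A
  · rw [eval_piecewise_of_mem f x hi]
    exact hf i hi
  · rw [eval_piecewise_of_notMem f x hi]
    exact (norm_eval_le x i).trans hx

end Piecewise

theorem exists_norm_le_one_apply_eq_norm_sub_le {x z : c0Sum E} {C : Finset ι} {r : ℝ}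
    (hx : ‖x‖ ≤ 1) (hz : ‖z‖ ≤ 1) (hr0 : 0 ≤ r) (hr1 : r < 1)
    (hC : ∀ i ∈ C, 1 - r ≤ ‖eval i x‖) (hC' : ∀ i ∉ C, ‖eval i z - eval i x‖ ≤ r) :
    ∃ (R : c0Sum E →L[ℝ] c0Sum E) (v : c0Sum E), ‖R‖ ≤ 1 ∧ ‖v‖ ≤ 1 ∧ ‖v - x‖ ≤ r ∧ R v = z ∧
      ∀ y, ∀ i ∉ C, eval i (R y) = eval i y := by
  classical
  let u (i : ι) : E i := ‖eval i x‖⁻¹ • eval i x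
  let v : c0Sum E := piecewise C u z
  have hu (i) (hi : i ∈ C) : ‖u i‖ = 1 := by
    have : ‖eval i x‖ ≠ 0 := by linarith [hC i hi]
    rw [norm_smul, norm_inv, norm_norm, inv_mul_cancel₀ this]
  have hv_mem (i) (hi : i ∈ C) : eval i v = u i := eval_piecewise_of_mem u z hi
  have hv_notMem (i) (hi : i ∉ C) : eval i v = eval i z := eval_piecewise_of_notMem u z hi
  obtain ⟨R, hR, hRv, hRC⟩ := exists_norm_le_one_apply_eq_eval_eq (v := v) (z := z) (C := C)
    (fun i hi ↦ by rw [hv_mem i hi, hu i hi]; exact (norm_eval_le z i).trans hz) hv_notMem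
  refine ⟨R, v, hR, norm_piecewise_le (fun i hi ↦ (hu i hi).le) hz, ?_, hRv, hRC⟩
  refine norm_le_of_forall_le hr0 fun i ↦ ?_
  rw [map_sub]
  by_cases hi : i ∈ C
  · rw [hv_mem i hi]
    linarith [norm_inv_norm_smul_self_sub_le ((norm_eval_le x i).trans hx), hC i hi]
  · rw [hv_notMem i hi]
    exact hC' i hi

section Truncate

variable [DecidableEq ι] (A : Finset ι)

/-- The projection of the `c₀`-sum onto the blocks indexed by `A`. -/
def truncate : c0Sum E →L[ℝ] c0Sum E :=
  map (C := 1) (A.piecewise (fun i ↦ .id ℝ (E i)) 0) fun i ↦ by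
    by_cases hi : i ∈ A
    · rw [A.piecewise_eq_of_mem _ _ hi]
      exact ContinuousLinearMap.norm_id_le
    · simp [hi]

theorem norm_truncate_le : ‖truncate (E := E) A‖ ≤ 1 := norm_map_le _ _

variable {A}

theorem eval_truncate_of_mem (x : c0Sum E) {i : ι} (hi : i ∈ A) :
    eval i (truncate A x) = eval i x := by
  simp [truncate, hi]

theorem eval_truncate_of_notMem (x : c0Sum E) {i : ι} (hi : i ∉ A) :
    eval i (truncate A x) = 0 := by
  simp [truncate, hi]

theorem truncate_congr {x y : c0Sum E} (h : ∀ i ∈ A, eval i x = eval i y) :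
    truncate A x = truncate A y := by
  ext i
  by_cases hi : i ∈ A
  · rw [eval_truncate_of_mem x hi, eval_truncate_of_mem y hi, h i hi]
  · rw [eval_truncate_of_notMem x hi, eval_truncate_of_notMem y hi]

theorem truncate_truncate (x : c0Sum E) : truncate A (truncate A x) = truncate A x :=
  truncate_congr fun _ hi ↦ eval_truncate_of_mem x hi

theorem apply_eq_of_comp_truncate_eq {Y : Type*} [NormedAddCommGroup Y] [NormedSpace ℝ Y]
    {T : c0Sum E →L[ℝ] Y} (hT : T.comp (truncate A) = T) {x y : c0Sum E}
    (h : ∀ i ∈ A, eval i x = eval i y) : T x = T y := by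
  rw [← hT, ContinuousLinearMap.comp_apply, ContinuousLinearMap.comp_apply, truncate_congr h]

theorem norm_sub_truncate_le (x : c0Sum E) : ‖x - truncate A x‖ ≤ ‖x‖ := by
  refine norm_le_of_forall_le (norm_nonneg x) fun i ↦ ?_
  by_cases hi : i ∈ A
  · rw [map_sub, eval_truncate_of_mem x hi, sub_self, norm_zero]
    exact norm_nonneg x
  · rw [map_sub, eval_truncate_of_notMem x hi, sub_zero]
    exact norm_eval_le x i

instance finiteDimensional_range_truncate [∀ i, FiniteDimensional ℝ (E i)] :
    FiniteDimensional ℝ (truncate (E := E) A).range := by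
  let restrict : (truncate (E := E) A).range →ₗ[ℝ] ∀ i : A, E i :=
    LinearMap.pi fun i ↦ (eval (E := E) (i : ι)).toLinearMap.comp (Submodule.subtype _)
  refine Module.Finite.of_injective restrict ?_
  rintro ⟨-, x, rfl⟩ ⟨-, y, rfl⟩ h
  have htrunc : truncate A (truncate A x) = truncate A (truncate A y) :=
    truncate_congr fun i hi ↦ congr_fun h ⟨i, hi⟩
  rw [truncate_truncate, truncate_truncate] at htrunc
  exact Subtype.ext htrunc

theorem exists_norm_comp_apply_eq_opNorm_comp_of_comp_truncate_eq
    [∀ i, FiniteDimensional ℝ (E i)] {Y : Type*} [NormedAddCommGroup Y] [NormedSpace ℝ Y]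
    {T : c0Sum E →L[ℝ] Y} (hT : ‖T‖ ≤ 1) (hTA : T.comp (truncate A) = T) {x : c0Sum E}
    (hx : ‖x‖ ≤ 1) {γ : ℝ} (hγ : 0 < γ) :
    ∃ (U : Y →L[ℝ] Y) (z : c0Sum E), ‖U - .id ℝ Y‖ ≤ γ ∧ ‖z‖ ≤ 1 ∧ ‖U (T z)‖ = ‖U.comp T‖ ∧
      (∀ i ∉ A, eval i z = eval i x) ∧ 2 - (3 + γ⁻¹) * (1 - ‖T x‖) ≤ ‖T (z + x)‖ := by
  obtain ⟨U, z, hU, hz, hUz, hTz⟩ :=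
    exists_norm_comp_apply_eq_opNorm_comp hT (norm_truncate_le A) hTA hx hγ
  let z' : c0Sum E := piecewise A (fun i ↦ eval i z) x
  have hTz' : T z' = T z :=
    apply_eq_of_comp_truncate_eq hTA fun i hi ↦ eval_piecewise_of_mem _ x hi
  exact ⟨U, z', hU, norm_piecewise_le (fun i _ ↦ (norm_eval_le z i).trans hz) hx,
    by rw [hTz', hUz], fun i hi ↦ eval_piecewise_of_notMem _ x hi,
    by rwa [map_add, hTz', ← map_add]⟩

end Truncate

section UniformConvexSpace

variable (E) (Y : Type*) [NormedAddCommGroup Y] [NormedSpace ℝ Y] [UniformConvexSpace Y]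

theorem exists_forall_norm_apply_le_of_eval_eq_zero {τ b : ℝ} (hτ : 0 < τ) (hb : 0 < b) :
    ∃ δ : ℝ, 0 < δ ∧ ∀ (T : c0Sum E →L[ℝ] Y) (x : c0Sum E), ‖T‖ ≤ 1 → ‖x‖ ≤ 1 →
      1 - δ < ‖T x‖ → ∀ y : c0Sum E, (∀ i, 1 - τ ≤ ‖eval i x‖ → eval i y = 0) →
        ‖T y‖ ≤ b * ‖y‖ := by
  obtain ⟨δ, hδ, H⟩ :=
    exists_forall_norm_lt_of_norm_add_le_of_norm_sub_le (Y := Y) (mul_pos hb hτ)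
  refine ⟨δ, hδ, fun T x hT hx hTx y hy ↦ ?_⟩
  rcases eq_or_ne y 0 with rfl | hy0
  · simp
  have hy_pos : 0 < ‖y‖ := norm_pos_iff.2 hy0
  have norm_T_le {w : c0Sum E} (hw : ‖w‖ ≤ 1) : ‖T w‖ ≤ 1 := (T.unit_le_opNorm w hw).trans hT
  let w : c0Sum E := (τ / ‖y‖) • y
  have hw : ‖w‖ = τ := by
    rw [norm_smul, Real.norm_of_nonneg (by positivity), div_mul_cancel₀ _ hy_pos.ne']
  have hw0 (i) (hi : 1 - τ ≤ ‖eval i x‖) : eval i w = 0 := by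
    rw [map_smul, hy i hi, smul_zero]
  have hadd : ‖T x + T w‖ ≤ 1 := by
    rw [← map_add]
    exact norm_T_le (norm_add_le_one_of_eval_eq_zero hx hw.le hw0)
  have hsub : ‖T x - T w‖ ≤ 1 := by
    rw [← map_sub, sub_eq_add_neg]
    exact norm_T_le (norm_add_le_one_of_eval_eq_zero hx (by rw [norm_neg, hw]) fun i hi ↦ by
      rw [map_neg, hw0 i hi, neg_zero])
  have hTw : τ * (‖T y‖ / ‖y‖) < τ * b := by
    have := H (T x) (T w) hadd hsub hTx
    rwa [map_smul, norm_smul, Real.norm_of_nonneg (by positivity), div_mul_eq_mul_div,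
      mul_div_assoc, mul_comm b] at this
  exact ((div_lt_iff₀ hy_pos).1 (lt_of_mul_lt_mul_left hTw hτ.le)).le

theorem exists_forall_opNorm_sub_comp_truncate_le [DecidableEq ι] {τ b : ℝ} (hτ : 0 < τ)
    (hb : 0 < b) :
    ∃ δ : ℝ, 0 < δ ∧ ∀ (T : c0Sum E →L[ℝ] Y) (x : c0Sum E) (A : Finset ι), ‖T‖ ≤ 1 → ‖x‖ ≤ 1 →
      1 - δ < ‖T x‖ → (∀ i, 1 - τ ≤ ‖eval i x‖ → i ∈ A) → ‖T - T.comp (truncate A)‖ ≤ b := by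
  obtain ⟨δ, hδ, H⟩ := exists_forall_norm_apply_le_of_eval_eq_zero E Y hτ hb
  refine ⟨δ, hδ, fun T x A hT hx hTx hA ↦ ?_⟩
  refine ContinuousLinearMap.opNorm_le_bound _ hb.le fun y ↦ ?_
  calc
    ‖(T - T.comp (truncate A)) y‖ = ‖T (y - truncate A y)‖ := by
      rw [map_sub, sub_apply, ContinuousLinearMap.comp_apply]
    _ ≤ b * ‖y - truncate A y‖ := H T x hT hx hTx _ fun i hi ↦ by
      rw [map_sub, eval_truncate_of_mem y (hA i hi), sub_self]
    _ ≤ b * ‖y‖ := by gcongr; exact norm_sub_truncate_le y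

variable {E} [∀ i, FiniteDimensional ℝ (E i)]

theorem exists_forall_exists_norm_apply_eq_of_comp_truncate_eq [DecidableEq ι]
    (hE : UniformlyConvexFamily E) {r ρ : ℝ} (hr0 : 0 < r) (hr1 : r < 1) (hρ : 0 < ρ) :
    ∃ θ : ℝ, 0 < θ ∧ ∀ (T : c0Sum E →L[ℝ] Y) (x : c0Sum E) (A : Finset ι), ‖T‖ ≤ 1 → ‖x‖ ≤ 1 →
      T.comp (truncate A) = T → (∀ i ∈ A, 1 - r ≤ ‖eval i x‖) → 1 - θ < ‖T x‖ →
        ∃ (v : c0Sum E) (S : c0Sum E →L[ℝ] Y),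
          ‖v‖ ≤ 1 ∧ ‖S v‖ = ‖S‖ ∧ ‖v - x‖ ≤ r ∧ ‖S - T‖ ≤ ρ := by
  obtain ⟨τ, hτ, hclose⟩ := hE.exists_forall_norm_sub_lt hr0
  let γ := ρ / 2
  have hγ : 0 < γ := half_pos hρ
  obtain ⟨δ, hδ, hsmall⟩ := exists_forall_norm_apply_le_of_eval_eq_zero E Y hτ (half_pos hγ)
  have hγ3 : 0 < 3 + γ⁻¹ := by positivity
  refine ⟨δ / (3 + γ⁻¹), by positivity, fun T x A hT hx hTA hA hTx ↦ ?_⟩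
  obtain ⟨U, z, hU, hz, hUz, hzA, hTz⟩ :=
    exists_norm_comp_apply_eq_opNorm_comp_of_comp_truncate_eq hT hTA hx hγ
  let m : c0Sum E := (2⁻¹ : ℝ) • (z + x)
  have hm : ‖m‖ ≤ 1 := by
    rw [norm_smul, norm_inv, Real.norm_two]
    linarith [norm_add_le z x]
  have hTm : 1 - δ < ‖T m‖ := by
    have hloss : (3 + γ⁻¹) * (1 - ‖T x‖) < δ := (lt_div_iff₀' hγ3).1 (by linarith)
    rw [map_smul, norm_smul, norm_inv, Real.norm_two]
    linarith
  let C : Finset ι := A.filter fun i ↦ ‖eval i m‖ < 1 - τ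
  have hzC (i) (hi : i ∉ C) : ‖eval i z - eval i x‖ ≤ r := by
    by_cases hiA : i ∈ A
    · refine (hclose i _ _ ((norm_eval_le z i).trans hz) ((norm_eval_le x i).trans hx) ?_).le
      rw [← map_add, ← map_smul]
      exact not_lt.1 fun h ↦ hi (Finset.mem_filter.2 ⟨hiA, h⟩)
    · rw [hzA i hiA, sub_self, norm_zero]
      exact hr0.le
  obtain ⟨R, v, hR, hv, hvx, hRv, hRC⟩ := exists_norm_le_one_apply_eq_norm_sub_le hx hz hr0.le hr1
    (fun i hi ↦ hA i (Finset.mem_filter.1 hi).1) hzC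
  have hTR (y : c0Sum E) : ‖T (R y - y)‖ ≤ γ * ‖y‖ := by
    have hle : ‖T (R y - y)‖ ≤ γ / 2 * ‖R y - y‖ := hsmall T m hT hm hTm _ fun i hi ↦ by
      rw [map_sub, hRC y i fun h ↦ (Finset.mem_filter.1 h).2.not_ge hi, sub_self]
    have hRy : ‖R y‖ ≤ ‖y‖ := by simpa only [one_mul] using R.le_of_opNorm_le hR y
    nlinarith [norm_sub_le (R y) y]
  refine ⟨v, (U.comp T).comp R, hv, norm_comp_apply_eq_opNorm_comp hR hv (by rw [hRv]; exact hUz),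
    hvx, ?_⟩
  exact (opNorm_comp_comp_sub_le hT hU hR hγ.le hTR).trans_eq (add_halves ρ)

end UniformConvexSpace

end c0Sum

end C0Sum

theorem stmt7_general {ι : Type*} {E : ι → Type*} [∀ i, NormedAddCommGroup (E i)]
    [∀ i, NormedSpace ℝ (E i)] [∀ i, FiniteDimensional ℝ (E i)] (hE : UniformlyConvexFamily E)
    (Y : Type*) [NormedAddCommGroup Y] [NormedSpace ℝ Y] [UniformConvexSpace Y] :
    HasBPBp (c0Sum E) Y := by
  classical
  refine hasBPBp_of_exists_norm_apply_eq fun ε hε ↦ ?_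
  obtain ⟨r, hr0, hr1, hrε⟩ : ∃ r : ℝ, 0 < r ∧ r < 1 ∧ r < ε := by
    obtain ⟨r, hr0, hr⟩ := exists_between (lt_min one_pos hε)
    exact ⟨r, hr0, lt_min_iff.1 hr⟩
  obtain ⟨θ, hθ, hnear⟩ :=
    c0Sum.exists_forall_exists_norm_apply_eq_of_comp_truncate_eq Y hE hr0 hr1 (half_pos hε)
  obtain ⟨a, ha, haε, haθ⟩ : ∃ a : ℝ, 0 < a ∧ a < ε / 2 ∧ a < θ / 2 := by
    obtain ⟨a, ha, h⟩ := exists_between (lt_min (half_pos hε) (half_pos hθ))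
    exact ⟨a, ha, lt_min_iff.1 h⟩
  obtain ⟨δ, hδ, htrunc⟩ := c0Sum.exists_forall_opNorm_sub_comp_truncate_le E Y hr0 ha
  refine ⟨min δ (θ / 2), by positivity, fun T x hT hx hTx ↦ ?_⟩
  have hfin := c0Sum.finite_setOf_le_norm_eval x (sub_pos.2 hr1)
  let A : Finset ι := hfin.toFinset
  let T' : c0Sum E →L[ℝ] Y := T.comp (c0Sum.truncate A)
  have hTT' : ‖T - T'‖ ≤ a := htrunc T x A hT.le hx.le
    (by linarith [min_le_left δ (θ / 2)]) fun i hi ↦ hfin.mem_toFinset.2 hi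
  have hT' : ‖T'‖ ≤ 1 := (T.opNorm_comp_le _).trans (by
    rw [hT, one_mul]
    exact c0Sum.norm_truncate_le A)
  have hT'A : T'.comp (c0Sum.truncate A) = T' := by
    ext y
    exact congr_arg T (c0Sum.truncate_truncate y)
  have hT'x : 1 - θ < ‖T' x‖ := by
    have h₁ : ‖T x - T' x‖ ≤ a := ((T - T').unit_le_opNorm x hx.le).trans hTT'
    linarith [norm_sub_norm_le (T x) (T' x), min_le_right δ (θ / 2)]
  obtain ⟨v, S, hv, hSv, hvx, hST'⟩ :=
    hnear T' x A hT' hx.le hT'A (fun i hi ↦ hfin.mem_toFinset.1 hi) hT'x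
  refine ⟨v, S, hv, hSv, hvx.trans_lt hrε, ?_⟩
  linarith [norm_sub_le_norm_sub_add_norm_sub S T' T, norm_sub_rev T T']

/-- Theorem 6, the main theorem of the paper. If `Y` is a uniformly convex
Banach space, then the pair `(c₀(⊕ₙ ℓ₂ⁿ), Y)` has the Bishop–Phelps–Bollobás property for
operators. -/
theorem stmt7 (Y : Type*) [NormedAddCommGroup Y] [NormedSpace ℝ Y]
    [UniformConvexSpace Y] [CompleteSpace Y] :
    HasBPBp c0E2 Y := by
  rw [← c0Sum_E2]
  exact stmt7_general (uniformlyConvexFamily_of_innerProductSpace E2) Y
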